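/- arXiv:0707.1893 — 3 statements merged into one kernel-verified Lean document; each statement's English description precedes it below -/
import Mathlib

section
/- Let Φ, G : ℝ^{n+1} → ℝ be C² functions and let x ∈ ℝ^{n+1} be a point with Φ(x) = 0 and ∇Φ(x) ≠ 0 and G(x) ≠ 0. Define A_mcurv(Φ) = -ΔΦ + ⟨∇Φ, (Hess Φ)(∇Φ)⟩ / ‖∇Φ‖², where ΔΦ = Σ_a ∂_a∂_aΦ and Hess Φ is the Hessian. Then A_mcurv(G·Φ)(x) = G(x) · A_mcurv(Φ)(x); that is, A_mcurv is a dual density on the hypersurface {Φ = 0}. -/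
noncomputable section

/-- The partial derivative `∂ₐΦ(x)`. -/
def pderiv1 {m : ℕ} (Φ : EuclideanSpace ℝ (Fin m) → ℝ)
    (x : EuclideanSpace ℝ (Fin m)) (a : Fin m) : ℝ :=
  fderiv ℝ Φ x (EuclideanSpace.single a 1)

/-- The second partial derivative `∂ₐ∂_bΦ(x)`. -/
def pderiv2 {m : ℕ} (Φ : EuclideanSpace ℝ (Fin m) → ℝ)
    (x : EuclideanSpace ℝ (Fin m)) (a b : Fin m) : ℝ :=
  fderiv ℝ (fun y => fderiv ℝ Φ y (EuclideanSpace.single b 1)) x (EuclideanSpace.single a 1)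

/-- The mean-curvature dual density
`A_mcurv(Φ)(x) = -ΔΦ(x) + (Σ_{a,b} ∂ₐΦ ∂_bΦ ∂ₐ∂_bΦ)/(Σ_c (∂_cΦ)²)`. -/
def Amcurv {m : ℕ} (Φ : EuclideanSpace ℝ (Fin m) → ℝ)
    (x : EuclideanSpace ℝ (Fin m)) : ℝ :=
  -(∑ a, pderiv2 Φ x a a) +
    (∑ a, ∑ b, pderiv1 Φ x a * pderiv1 Φ x b * pderiv2 Φ x a b) /
      (∑ c, (pderiv1 Φ x c) ^ 2)

/-!
At a point where `∇Φ ≠ 0`, `-A_mcurv(Φ)` is the trace of the Hessian of `Φ` restricted to the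
tangent hyperplane `∇Φ^⊥`. Where `Φ` vanishes, `∇(GΦ) = G ∇Φ`, so the hyperplane is unchanged, and
`Hess (GΦ) = G Hess Φ + ∇G ⊗ ∇Φ + ∇Φ ⊗ ∇G`. The two rank-one terms vanish on `∇Φ^⊥`, and the
trace is linear in the Hessian.
-/

section TangentialTrace

open Matrix

variable {ι K : Type*} [Fintype ι] [Field K]

/-- The trace of the bilinear form `H` on the hyperplane orthogonal to `p`, as a linear map in `H`.
It is written as the full trace minus the normal part `(pᵀ H p) / (pᵀ p)`, which is what appears in
`Amcurv`; it has this meaning only if `p ⬝ᵥ p ≠ 0`. -/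
def tangentialTrace (p : ι → K) : Matrix ι ι K →ₗ[K] K where
  toFun H := trace H - p ⬝ᵥ H *ᵥ p / (p ⬝ᵥ p)
  map_add' H H' := by
    rw [trace_add, add_mulVec, dotProduct_add]
    ring
  map_smul' c H := by
    rw [trace_smul, smul_mulVec, dotProduct_smul]
    simp only [smul_eq_mul, RingHom.id_apply]
    ring

lemma tangentialTrace_apply (p : ι → K) (H : Matrix ι ι K) :
    tangentialTrace p H = trace H - p ⬝ᵥ H *ᵥ p / (p ⬝ᵥ p) :=
  rfl

lemma tangentialTrace_smul_normal {c : K} (hc : c ≠ 0) (p : ι → K) :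
    tangentialTrace (c • p) = tangentialTrace p := by
  ext1 H
  have numerator : (c • p) ⬝ᵥ H *ᵥ (c • p) = c * c * (p ⬝ᵥ H *ᵥ p) := by
    simp only [mulVec_smul, smul_dotProduct, dotProduct_smul, smul_eq_mul, mul_assoc]
  have denominator : (c • p) ⬝ᵥ (c • p) = c * c * (p ⬝ᵥ p) := by
    simp only [smul_dotProduct, dotProduct_smul, smul_eq_mul, mul_assoc]
  rw [tangentialTrace_apply, tangentialTrace_apply, numerator, denominator,
    mul_div_mul_left _ _ (mul_ne_zero hc hc)]

lemma tangentialTrace_vecMulVec_normal_right {p : ι → K} (hp : p ⬝ᵥ p ≠ 0) (q : ι → K) :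
    tangentialTrace p (vecMulVec q p) = 0 := by
  rw [tangentialTrace_apply, trace_vecMulVec, vecMulVec_mulVec, op_smul_eq_smul, dotProduct_smul,
    smul_eq_mul, mul_div_cancel_left₀ _ hp, dotProduct_comm, sub_self]

lemma tangentialTrace_vecMulVec_normal_left {p : ι → K} (hp : p ⬝ᵥ p ≠ 0) (q : ι → K) :
    tangentialTrace p (vecMulVec p q) = 0 := by
  rw [tangentialTrace_apply, trace_vecMulVec, vecMulVec_mulVec, op_smul_eq_smul, dotProduct_smul,
    smul_eq_mul, mul_div_cancel_right₀ _ hp, dotProduct_comm, sub_self]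

end TangentialTrace

/-- The Hessian matrix of `Φ` at `x`, the bilinear form whose tangential trace `Amcurv` computes.
As in `pderiv2`, the row index is that of the outer derivative. -/
def hessianMatrix {m : ℕ} (Φ : EuclideanSpace ℝ (Fin m) → ℝ) (x : EuclideanSpace ℝ (Fin m)) :
    Matrix (Fin m) (Fin m) ℝ :=
  .of (pderiv2 Φ x)

section ProductRule

open Asymptotics Filter Topology

lemma hasFDerivAt_smul_of_eq_zero {𝕜 E F : Type*} [NontriviallyNormedField 𝕜]
    [NormedAddCommGroup E] [NormedSpace 𝕜 E] [NormedAddCommGroup F] [NormedSpace 𝕜 F]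
    {c : E → 𝕜} {f : E → F} {f' : E →L[𝕜] F} {x : E}
    (hc : ContinuousAt c x) (hf : HasFDerivAt f f' x) (hfx : f x = 0) :
    HasFDerivAt (fun y => c y • f y) (c x • f') x := by
  have increment : (fun y => c y - c x) =o[𝓝 x] fun _ => (1 : ℝ) :=
    (isLittleO_one_iff ℝ).2 (tendsto_sub_nhds_zero_iff.2 hc)
  have linear_growth : f =O[𝓝 x] fun y => ‖y - x‖ := by
    simpa only [hfx, sub_zero] using hf.isBigO_sub.norm_right
  have remainder : HasFDerivAt (fun y => (c y - c x) • f y) (0 : E →L[𝕜] F) x := by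
    refine .of_isLittleO (.of_norm_right ?_)
    simpa [hfx] using increment.smul_isBigO linear_growth
  simpa [sub_smul] using remainder.fun_add (hf.fun_const_smul (c x))

variable {m : ℕ} {Φ G : EuclideanSpace ℝ (Fin m) → ℝ} {x : EuclideanSpace ℝ (Fin m)}

lemma pderiv1_mul (hG : DifferentiableAt ℝ G x) (hΦ : DifferentiableAt ℝ Φ x) (a : Fin m) :
    pderiv1 (fun y => G y * Φ y) x a = G x * pderiv1 Φ x a + Φ x * pderiv1 G x a := by
  simp [pderiv1, fderiv_fun_mul hG hΦ]

lemma pderiv1_mul_of_eq_zero (hG : ContinuousAt G x) (hΦ : DifferentiableAt ℝ Φ x)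
    (hx : Φ x = 0) : pderiv1 (fun y => G y * Φ y) x = G x • pderiv1 Φ x := by
  ext a
  exact DFunLike.congr_fun (hasFDerivAt_smul_of_eq_zero hG hΦ.hasFDerivAt hx).fderiv _

lemma hessianMatrix_mul_of_eq_zero (hΦ : ContDiffAt ℝ 2 Φ x) (hG : ContDiffAt ℝ 1 G x)
    (hx : Φ x = 0) :
    hessianMatrix (fun y => G y * Φ y) x =
      G x • hessianMatrix Φ x + Matrix.vecMulVec (pderiv1 G x) (pderiv1 Φ x) +
        Matrix.vecMulVec (pderiv1 Φ x) (pderiv1 G x) := by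
  ext a b
  have dG : DifferentiableAt ℝ G x := hG.differentiableAt one_ne_zero
  have dΦ : DifferentiableAt ℝ Φ x := hΦ.differentiableAt two_ne_zero
  have dΦb : DifferentiableAt ℝ (pderiv1 Φ · b) x :=
    ((hΦ.fderiv_right (m := 1) le_rfl).differentiableAt one_ne_zero).clm_apply
      (differentiableAt_const _)
  have cGb : ContinuousAt (pderiv1 G · b) x :=
    (hG.continuousAt_fderiv one_ne_zero).clm_apply continuousAt_const
  have leibniz : (pderiv1 (fun y => G y * Φ y) · b) =ᶠ[𝓝 x]
      fun y => G y * pderiv1 Φ y b + pderiv1 G y b * Φ y := by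
    filter_upwards [hG.eventually (by simp), hΦ.eventually (by simp)] with y hGy hΦy
    rw [pderiv1_mul (hGy.differentiableAt one_ne_zero) (hΦy.differentiableAt two_ne_zero),
      mul_comm (Φ y)]
  have derivative : HasFDerivAt (pderiv1 (fun y => G y * Φ y) · b)
      (G x • fderiv ℝ (pderiv1 Φ · b) x + pderiv1 Φ x b • fderiv ℝ G x +
        pderiv1 G x b • fderiv ℝ Φ x) x :=
    ((dG.hasFDerivAt.fun_mul dΦb.hasFDerivAt).fun_add
      (hasFDerivAt_smul_of_eq_zero cGb dΦ.hasFDerivAt hx)).congr_of_eventuallyEq leibniz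
  change fderiv ℝ (pderiv1 (fun y => G y * Φ y) · b) x (EuclideanSpace.single a 1) = _
  rw [derivative.fderiv]
  simp only [pderiv1, pderiv2, hessianMatrix, Matrix.vecMulVec_apply, Matrix.add_apply,
    Matrix.smul_apply, Matrix.of_apply, add_apply, smul_apply, smul_eq_mul]
  ring

end ProductRule

section MeanCurvature

variable {m : ℕ} {Φ G : EuclideanSpace ℝ (Fin m) → ℝ} {x : EuclideanSpace ℝ (Fin m)}

lemma pderiv1_eq_gradient (Φ : EuclideanSpace ℝ (Fin m) → ℝ) (x : EuclideanSpace ℝ (Fin m)) :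
    pderiv1 Φ x = (gradient Φ x).ofLp := by
  ext a
  simp [pderiv1, ← inner_gradient_left, EuclideanSpace.inner_single_right]

lemma amcurv_eq_neg_tangentialTrace (Φ : EuclideanSpace ℝ (Fin m) → ℝ)
    (x : EuclideanSpace ℝ (Fin m)) :
    Amcurv Φ x = -tangentialTrace (pderiv1 Φ x) (hessianMatrix Φ x) := by
  rw [tangentialTrace_apply, neg_sub, sub_eq_neg_add]
  simp only [Amcurv, hessianMatrix, Matrix.of_apply, Matrix.trace, Matrix.diag, dotProduct,
    Matrix.mulVec, Finset.mul_sum, sq]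
  simp only [mul_comm, mul_left_comm]

theorem stmt1_general (hΦ : ContDiffAt ℝ 2 Φ x) (hG : ContDiffAt ℝ 1 G x) (hx : Φ x = 0)
    (hgrad : gradient Φ x ≠ 0) (hGx : G x ≠ 0) :
    Amcurv (fun y => G y * Φ y) x = G x * Amcurv Φ x := by
  have hp : pderiv1 Φ x ⬝ᵥ pderiv1 Φ x ≠ 0 := by
    rwa [Ne, dotProduct_self_eq_zero, pderiv1_eq_gradient, WithLp.ofLp_eq_zero]
  rw [amcurv_eq_neg_tangentialTrace, amcurv_eq_neg_tangentialTrace,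
    pderiv1_mul_of_eq_zero hG.continuousAt (hΦ.differentiableAt two_ne_zero) hx,
    hessianMatrix_mul_of_eq_zero hΦ hG hx, tangentialTrace_smul_normal hGx,
    map_add, map_add, map_smul, tangentialTrace_vecMulVec_normal_right hp,
    tangentialTrace_vecMulVec_normal_left hp, add_zero, add_zero, smul_eq_mul, mul_neg]

end MeanCurvature

/-- For C² functions `Φ G : ℝ^{n+1} → ℝ` and a point `x` with `Φ x = 0`,
`∇Φ(x) ≠ 0` and `G x ≠ 0`, the mean-curvature expression `A_mcurv` is a dual density:
`A_mcurv(G·Φ)(x) = G(x) · A_mcurv(Φ)(x)`. -/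
theorem stmt1 (n : ℕ) (Φ G : EuclideanSpace ℝ (Fin (n + 1)) → ℝ)
    (hΦ : ContDiff ℝ 2 Φ) (hG : ContDiff ℝ 2 G)
    (x : EuclideanSpace ℝ (Fin (n + 1))) (hx : Φ x = 0)
    (hgrad : gradient Φ x ≠ 0) (hGx : G x ≠ 0) :
    Amcurv (fun y => G y * Φ y) x = G x * Amcurv Φ x :=
  stmt1_general hΦ.contDiffAt (hG.contDiffAt.of_le one_le_two) hx hgrad hGx
end
end

section
/- Let V be a finite-dimensional vector space over a field K, let f : V → V and A : V → V be linear operators with A ∘ f = f ∘ A. Then f induces a linear isomorphism from V/ker(f) onto range(f) intertwining the operator induced by A on V/ker(f) with the restriction of A to range(f), and consequently det(1 + t·A) = det(1 + t·A|_{ker f}) · det(1 + t·A|_{range f}) for every t ∈ K. -/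
open LinearMap Submodule

/-! If `f : V → W` intertwines `A` with `B`, that is `B ∘ f = f ∘ A`, then it also intertwines
`1 + t • A` with `1 + t • B`, so it is enough to factor the determinant of `A` itself. The
determinant is multiplicative along the invariant submodule `ker f`, and the first isomorphism
theorem conjugates the operator induced by `A` on `V ⧸ ker f` into the restriction of `B` to
`range f`. -/

section Semiring

variable {R V W : Type*} [Semiring R] [AddCommMonoid V] [Module R V] [AddCommMonoid W] [Module R W]
  {f : V →ₗ[R] W} {A : V →ₗ[R] V} {B : W →ₗ[R] W}

theorem map_mem_ker_of_comp_eq_comp (h : B ∘ₗ f = f ∘ₗ A) : ∀ x ∈ ker f, A x ∈ ker f := by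
  intro x hx
  rw [mem_ker] at hx ⊢
  rw [← comp_apply, ← h, comp_apply, hx, map_zero]

theorem map_mem_range_of_comp_eq_comp (h : B ∘ₗ f = f ∘ₗ A) :
    ∀ y ∈ range f, B y ∈ range f := by
  rintro _ ⟨x, rfl⟩
  exact ⟨A x, (LinearMap.congr_fun h x).symm⟩

end Semiring

section CommSemiring

variable {R V W : Type*} [CommSemiring R] [AddCommMonoid V] [Module R V] [AddCommMonoid W]
  [Module R W] {f : V →ₗ[R] W} {A : V →ₗ[R] V} {B : W →ₗ[R] W}

theorem one_add_smul_comp_eq_comp_one_add_smul (h : B ∘ₗ f = f ∘ₗ A) (t : R) :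
    (1 + t • B) ∘ₗ f = f ∘ₗ (1 + t • A) := by
  simp only [add_comp, comp_add, smul_comp, comp_smul, h, Module.End.one_eq_id, id_comp, comp_id]

theorem restrict_one_add_smul {p : Submodule R V} (hA : ∀ x ∈ p, A x ∈ p) (t : R)
    (htA : ∀ x ∈ p, (1 + t • A) x ∈ p) :
    (1 + t • A).restrict htA = 1 + t • A.restrict hA :=
  rfl

end CommSemiring

section Ring

variable {R V W : Type*} [Ring R] [AddCommGroup V] [Module R V] [AddCommGroup W] [Module R W]

theorem quotKerEquivRange_mapQ {f : V →ₗ[R] W} {A : V →ₗ[R] V} {B : W →ₗ[R] W}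
    (h : B ∘ₗ f = f ∘ₗ A) (hker : ∀ x ∈ ker f, A x ∈ ker f)
    (hrange : ∀ y ∈ range f, B y ∈ range f) (v : V ⧸ ker f) :
    f.quotKerEquivRange ((ker f).mapQ (ker f) A hker v) =
      B.restrict hrange (f.quotKerEquivRange v) := by
  obtain ⟨x, rfl⟩ := Submodule.Quotient.mk_surjective _ v
  ext
  exact (LinearMap.congr_fun h x).symm

theorem finite_ker_of_finitePresentation_range [Module.Finite R V] (f : V →ₗ[R] W)
    [Module.FinitePresentation R (range f)] : Module.Finite R (ker f) := by
  rw [← f.ker_rangeRestrict]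
  exact .of_fg (Module.FinitePresentation.fg_ker f.rangeRestrict f.surjective_rangeRestrict)

end Ring

section CommRing

variable {R V W : Type*} [CommRing R] [AddCommGroup V] [Module R V] [AddCommGroup W] [Module R W]

theorem det_eq_det_of_equiv_intertwines (e : V ≃ₗ[R] W) {A : V →ₗ[R] V} {B : W →ₗ[R] W}
    (h : ∀ v, e (A v) = B (e v)) : LinearMap.det A = LinearMap.det B := by
  have hconj : e.toLinearMap ∘ₗ A ∘ₗ e.symm.toLinearMap = B := by
    ext w
    simp [h]
  rw [← hconj, LinearMap.det_conj]

theorem det_eq_det_restrict_ker_mul_det_restrict_range [Module.Finite R V] {f : V →ₗ[R] W}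
    [Module.Free R (ker f)] [Module.Free R (range f)] {A : V →ₗ[R] V} {B : W →ₗ[R] W}
    (h : B ∘ₗ f = f ∘ₗ A) (hker : ∀ x ∈ ker f, A x ∈ ker f)
    (hrange : ∀ y ∈ range f, B y ∈ range f) :
    LinearMap.det A = LinearMap.det (A.restrict hker) * LinearMap.det (B.restrict hrange) := by
  have : Module.FinitePresentation R (range f) :=
    Module.finitePresentation_of_projective R (range f)
  have : Module.Finite R (ker f) := finite_ker_of_finitePresentation_range f
  have : Module.Free R (V ⧸ ker f) := .of_equiv f.quotKerEquivRange.symm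
  rw [LinearMap.det_eq_det_mul_det (ker f) A hker,
    det_eq_det_of_equiv_intertwines f.quotKerEquivRange (quotKerEquivRange_mapQ h hker hrange)]

theorem stmt11_general [Module.Finite R V] (f : V →ₗ[R] W)
    [Module.Free R (ker f)] [Module.Free R (range f)] (A : V →ₗ[R] V) (B : W →ₗ[R] W)
    (hcomm : B ∘ₗ f = f ∘ₗ A) :
    ∃ (hker : ∀ x ∈ ker f, A x ∈ ker f) (hrange : ∀ y ∈ range f, B y ∈ range f),
      (∀ v : V ⧸ ker f,
          f.quotKerEquivRange ((ker f).mapQ (ker f) A hker v) =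
            B.restrict hrange (f.quotKerEquivRange v)) ∧
      ∀ t : R, LinearMap.det (1 + t • A) =
          LinearMap.det (1 + t • A.restrict hker) *
            LinearMap.det (1 + t • B.restrict hrange) := by
  have hker := map_mem_ker_of_comp_eq_comp hcomm
  have hrange := map_mem_range_of_comp_eq_comp hcomm
  refine ⟨hker, hrange, quotKerEquivRange_mapQ hcomm hker hrange, fun t => ?_⟩
  have ht := one_add_smul_comp_eq_comp_one_add_smul hcomm t
  have htker := map_mem_ker_of_comp_eq_comp ht
  have htrange := map_mem_range_of_comp_eq_comp ht
  rw [det_eq_det_restrict_ker_mul_det_restrict_range ht htker htrange,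
    restrict_one_add_smul hker, restrict_one_add_smul hrange]

end CommRing

/-- If `f` and `A` are commuting linear operators on a finite-dimensional
vector space `V` over a field `K`, then `ker f` and `range f` are `A`-invariant, the
isomorphism `V ⧸ ker f ≃ range f` induced by `f` intertwines the operator induced by
`A` on `V ⧸ ker f` with the restriction of `A` to `range f`, and consequently
`det(1 + t·A) = det(1 + t·A|_{ker f}) · det(1 + t·A|_{range f})` for every `t ∈ K`. -/
theorem stmt11 {K V : Type*} [Field K] [AddCommGroup V] [Module K V]
    [FiniteDimensional K V]
    (f A : V →ₗ[K] V) (hcomm : A ∘ₗ f = f ∘ₗ A) :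
    ∃ (hker : ∀ x ∈ ker f, A x ∈ ker f) (hrange : ∀ x ∈ range f, A x ∈ range f),
      (∀ v : V ⧸ ker f,
          f.quotKerEquivRange (Submodule.mapQ (ker f) (ker f) A
            (fun x hx => hker x hx) v) =
          A.restrict hrange (f.quotKerEquivRange v)) ∧
      ∀ t : K, LinearMap.det (1 + t • A) =
          LinearMap.det (1 + t • A.restrict hker) *
            LinearMap.det (1 + t • A.restrict hrange) :=
  stmt11_general f A A hcomm
end

section
/- Let E₀, E₁ be finite-dimensional vector spaces over a field K, let d : E₀ → E₁ be a linear map, and let A₀ : E₀ → E₀, A₁ : E₁ → E₁ be linear operators with A₁ ∘ d = d ∘ A₀. Then ker(d) is A₀-invariant, range(d) is A₁-invariant, A₁ induces an operator on the cokernel E₁/range(d), and for every t ∈ K: det(1 + t·A₀|_{E₀}) · det(1 + t·Ā₁) = det(1 + t·A₀|_{ker d}) · det(1 + t·A₁|_{E₁}), where Ā₁ is the operator induced by A₁ on E₁/range(d). Equivalently, det(1 + tA₀|_{E₀})/det(1 + tA₁|_{E₁}) = det(1 + tA₀|_{ker d})/det(1 + tĀ₁). -/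
open LinearMap Submodule

/-
Restricted to `range d`, the operator `A₁` is conjugate, by the first isomorphism theorem, to the
operator induced by `A₀` on `E₀ ⧸ ker d`. Writing `δ` for the common value of `det(1 + tA)` on these
two spaces, multiplicativity of the determinant along the invariant subspaces `ker d` and `range d`
gives `det(1 + tA₀) = det(1 + tA₀|_{ker d}) · δ` and `det(1 + tA₁) = δ · det(1 + tĀ₁)`.
-/

section Invariance

variable {R M N : Type*} [Semiring R] [AddCommMonoid M] [Module R M] [AddCommMonoid N] [Module R N]
  {d : M →ₗ[R] N} {f : M →ₗ[R] M} {g : N →ₗ[R] N}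

theorem ker_le_comap_ker_of_comp_eq (h : g ∘ₗ d = d ∘ₗ f) : ker d ≤ (ker d).comap f := by
  rw [← ker_comp, ← h]
  exact ker_le_ker_comp d g

theorem range_le_comap_range_of_comp_eq (h : g ∘ₗ d = d ∘ₗ f) : range d ≤ (range d).comap g := by
  rw [← map_le_iff_le_comap, ← range_comp, h]
  exact range_comp_le_range f d

end Invariance

section OneAddSMul

variable {R M : Type*} [CommSemiring R] [AddCommMonoid M] [Module R M]
  {f : M →ₗ[R] M} {p : Submodule R M}

theorem one_add_smul_comp_eq {N : Type*} [AddCommMonoid N] [Module R N] {d : M →ₗ[R] N}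
    {g : N →ₗ[R] N} (h : g ∘ₗ d = d ∘ₗ f) (t : R) :
    (1 + t • g) ∘ₗ d = d ∘ₗ (1 + t • f) := by
  rw [add_comp, comp_add, smul_comp, comp_smul, h, Module.End.one_eq_id, Module.End.one_eq_id,
    id_comp, comp_id]

theorem le_comap_one_add_smul (hf : p ≤ p.comap f) (t : R) : p ≤ p.comap (1 + t • f) :=
  fun _ hx ↦ p.add_mem hx (p.smul_mem t (hf hx))

theorem restrict_one_add_smul_s13 (hf : p ≤ p.comap f) (t : R) :
    (1 + t • f).restrict (le_comap_one_add_smul hf t) = 1 + t • f.restrict hf :=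
  rfl

end OneAddSMul

theorem mapQ_one_add_smul {R M : Type*} [CommRing R] [AddCommGroup M] [Module R M]
    {f : M →ₗ[R] M} {p : Submodule R M} (hf : p ≤ p.comap f) (t : R) :
    p.mapQ p (1 + t • f) (le_comap_one_add_smul hf t) = 1 + t • p.mapQ p f hf := by
  ext x
  rfl

section QuotKer

variable {R M N : Type*} [Ring R] [AddCommGroup M] [Module R M] [AddCommGroup N] [Module R N]

theorem ker_fg_of_finitePresentation_range [Module.Finite R M] (d : M →ₗ[R] N)
    [Module.FinitePresentation R (range d)] : (ker d).FG := by
  rw [← ker_rangeRestrict d]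
  exact Module.FinitePresentation.fg_ker d.rangeRestrict d.surjective_rangeRestrict

theorem quotKerEquivRange_comp_mapQ {d : M →ₗ[R] N} {f : M →ₗ[R] M} {g : N →ₗ[R] N}
    (h : g ∘ₗ d = d ∘ₗ f) :
    d.quotKerEquivRange.toLinearMap ∘ₗ (ker d).mapQ (ker d) f (ker_le_comap_ker_of_comp_eq h) =
      g.restrict (range_le_comap_range_of_comp_eq h) ∘ₗ d.quotKerEquivRange.toLinearMap := by
  ext x
  exact (LinearMap.congr_fun h x).symm

end QuotKer

section Det

variable {R M N : Type*} [CommRing R] [AddCommGroup M] [Module R M] [AddCommGroup N] [Module R N]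
  {d : M →ₗ[R] N} {f : M →ₗ[R] M} {g : N →ₗ[R] N}

theorem det_mapQ_ker_eq_det_restrict_range (h : g ∘ₗ d = d ∘ₗ f) :
    LinearMap.det ((ker d).mapQ (ker d) f (ker_le_comap_ker_of_comp_eq h)) =
      LinearMap.det (g.restrict (range_le_comap_range_of_comp_eq h)) := by
  rw [← LinearMap.det_conj _ d.quotKerEquivRange, ← LinearMap.comp_assoc,
    quotKerEquivRange_comp_mapQ h, LinearMap.comp_assoc, LinearEquiv.comp_symm, LinearMap.comp_id]

variable [Module.Finite R M] [Module.Finite R N]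
  [Module.Free R (ker d)] [Module.Free R (range d)] [Module.Free R (N ⧸ range d)]

theorem det_mul_det_mapQ_range (h : g ∘ₗ d = d ∘ₗ f) :
    LinearMap.det f *
        LinearMap.det ((range d).mapQ (range d) g (range_le_comap_range_of_comp_eq h)) =
      LinearMap.det (f.restrict (ker_le_comap_ker_of_comp_eq h)) * LinearMap.det g := by
  have hker := ker_le_comap_ker_of_comp_eq h
  have hrange := range_le_comap_range_of_comp_eq h
  have : Module.FinitePresentation R (range d) := Module.finitePresentation_of_projective R _
  have : Module.Finite R (ker d) := .of_fg (ker_fg_of_finitePresentation_range d)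
  have : Module.Free R (M ⧸ ker d) := .of_equiv d.quotKerEquivRange.symm
  rw [det_eq_det_mul_det (ker d) f hker, det_eq_det_mul_det (range d) g hrange,
    det_mapQ_ker_eq_det_restrict_range h, mul_assoc]

end Det

theorem stmt13_general {R E₀ E₁ : Type*} [CommRing R]
    [AddCommGroup E₀] [Module R E₀] [Module.Finite R E₀]
    [AddCommGroup E₁] [Module R E₁] [Module.Finite R E₁]
    (d : E₀ →ₗ[R] E₁) [Module.Free R (ker d)] [Module.Free R (range d)]
    [Module.Free R (E₁ ⧸ range d)] (A₀ : E₀ →ₗ[R] E₀) (A₁ : E₁ →ₗ[R] E₁)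
    (hcomm : A₁ ∘ₗ d = d ∘ₗ A₀) :
    ∃ (hker : ∀ x ∈ ker d, A₀ x ∈ ker d) (hrange : ∀ x ∈ range d, A₁ x ∈ range d),
      ∀ t : R,
        LinearMap.det (1 + t • A₀) *
            LinearMap.det (1 + t • Submodule.mapQ (range d) (range d) A₁
              (fun x hx => hrange x hx)) =
          LinearMap.det (1 + t • A₀.restrict hker) * LinearMap.det (1 + t • A₁) := by
  have hker := ker_le_comap_ker_of_comp_eq hcomm
  have hrange := range_le_comap_range_of_comp_eq hcomm
  refine ⟨hker, hrange, fun t ↦ ?_⟩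
  rw [← restrict_one_add_smul_s13 hker, ← mapQ_one_add_smul hrange]
  exact det_mul_det_mapQ_range (one_add_smul_comp_eq hcomm t)

/-- For a two-term complex, i.e. a linear map `d : E₀ → E₁` of
finite-dimensional vector spaces over a field `K`, and operators `A₀, A₁` with
`A₁ ∘ d = d ∘ A₀`: `ker d` is `A₀`-invariant, `range d` is `A₁`-invariant, `A₁`
induces an operator `Ā₁` on the cokernel `E₁ ⧸ range d`, and for every `t ∈ K`,
`det(1 + t·A₀) · det(1 + t·Ā₁) = det(1 + t·A₀|_{ker d}) · det(1 + t·A₁)`. -/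
theorem stmt13 {K E₀ E₁ : Type*} [Field K]
    [AddCommGroup E₀] [Module K E₀] [FiniteDimensional K E₀]
    [AddCommGroup E₁] [Module K E₁] [FiniteDimensional K E₁]
    (d : E₀ →ₗ[K] E₁) (A₀ : E₀ →ₗ[K] E₀) (A₁ : E₁ →ₗ[K] E₁)
    (hcomm : A₁ ∘ₗ d = d ∘ₗ A₀) :
    ∃ (hker : ∀ x ∈ ker d, A₀ x ∈ ker d) (hrange : ∀ x ∈ range d, A₁ x ∈ range d),
      ∀ t : K,
        LinearMap.det (1 + t • A₀) *
            LinearMap.det (1 + t • Submodule.mapQ (range d) (range d) A₁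
              (fun x hx => hrange x hx)) =
          LinearMap.det (1 + t • A₀.restrict hker) * LinearMap.det (1 + t • A₁) :=
  stmt13_general d A₀ A₁ hcomm
end
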